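/- For every cellular automaton f on A^ℤ, the language L(ω̃(f)) of its generic limit set is a Σ⁰₃ set of words. -/

import Mathlib

open Filter Set Function

namespace Gls

variable {A : Type*}

/-- The left shift map on `A^ℤ`. -/
def shift (x : ℤ → A) : ℤ → A := fun i => x (i + 1)

/-- A cellular automaton: a continuous shift-commuting self-map of the full shift. -/
def IsCA [TopologicalSpace A] (f : (ℤ → A) → (ℤ → A)) : Prop :=
  Continuous f ∧ f ∘ shift = shift ∘ f

/-- The set of limit points of the forward orbit of `x` under `f`. -/
def omegaSet [TopologicalSpace A] (f : (ℤ → A) → (ℤ → A)) (x : ℤ → A) : Set (ℤ → A) :=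
  {y | MapClusterPt y atTop fun t => f^[t] x}

/-- The realm of attraction of `Y`. -/
def realm [TopologicalSpace A] (f : (ℤ → A) → (ℤ → A)) (Y : Set (ℤ → A)) : Set (ℤ → A) :=
  {x | omegaSet f x ⊆ Y}

/-- The generic limit set: the intersection of all closed sets whose realm is comeager. -/
def genLimitSet [TopologicalSpace A] (f : (ℤ → A) → (ℤ → A)) : Set (ℤ → A) :=
  ⋂₀ {C | IsClosed C ∧ realm f C ∈ residual (ℤ → A)}

/-- The word `x_{[i, i+n)}` of length `n` read in the configuration `x` from position `i`. -/
def word (x : ℤ → A) (i : ℤ) (n : ℕ) : List A :=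
  (List.range n).map fun k => x (i + k)

/-- The cylinder set `[w]_i`. -/
def cylinder (w : List A) (i : ℤ) : Set (ℤ → A) := {x | word x i w.length = w}

/-- The language of `X`: all finite words occurring in points of `X`. -/
def lang (X : Set (ℤ → A)) : Set (List A) :=
  {w | ∃ x ∈ X, ∃ i : ℤ, word x i w.length = w}


/-- The arithmetical hierarchy over `ℕ`: `NatSigma 0` is the class of computable
predicates, and a predicate is `NatSigma (n+1)` (i.e. `Σ⁰ₙ₊₁`) if it is of the form
`{a | ∃ k, (a, k) ∈ R}` for a `Π⁰ₙ` relation `R` (i.e. a relation whose complement is `Σ⁰ₙ`). -/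
def NatSigma : ℕ → (ℕ → Prop) → Prop
  | 0 => fun P => ComputablePred P
  | (n + 1) => fun P =>
      ∃ R : ℕ → Prop, NatSigma n (fun a => ¬ R a) ∧ ∀ a, P a ↔ ∃ k, R (Nat.pair a k)

/-- A set of words is `Σ⁰ₙ` if, identifying words with natural numbers via the canonical
computable encoding, it is a `Σ⁰ₙ` subset of `ℕ`. -/
def SigmaLang {A : Type*} [Primcodable A] (n : ℕ) (P : Set (List A)) : Prop :=
  NatSigma n (fun m => ∃ w : List A, Encodable.encode w = m ∧ w ∈ P)

/-- A set of words is `Π⁰ₙ` if its complement is `Σ⁰ₙ`. -/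
def PiLang {A : Type*} [Primcodable A] (n : ℕ) (P : Set (List A)) : Prop :=
  SigmaLang n {w | w ∉ P}


theorem natSigma3 (P : ℕ → Prop) (b : ℕ → Bool) (hb : Primrec b)
    (h : ∀ m, P m ↔ ∃ k1, ∀ k2, ∃ k3, b (Nat.pair (Nat.pair (Nat.pair m k1) k2) k3) = true) :
    NatSigma 3 P := by
  refine ⟨fun a => ∀ k2, ∃ k3, b (Nat.pair (Nat.pair a k2) k3) = true, ?_, h⟩
  refine ⟨fun a => ¬ ∃ k3, b (Nat.pair a k3) = true, ?_, fun a => by push Not; rfl⟩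
  refine ⟨fun a => b a = true, ?_, fun a => by push Not; rfl⟩
  show ComputablePred _
  refine ⟨fun a => inferInstance, ?_⟩
  exact ((Primrec.not.comp hb).to_comp).of_eq (fun a => by cases h : b a <;> simp [h])

theorem exists_surj (α : Type*) [Primcodable α] [Inhabited α] :
    ∃ e : ℕ → α, Primrec e ∧ ∀ a, e (Encodable.encode a) = a := by
  refine ⟨fun n => (Encodable.decode n).getD default, ?_, fun a => by simp⟩
  exact Primrec.option_getD.comp Primrec.decode (Primrec.const _)

theorem sigma3_of {W K1 K2 K3 : Type*} [Primcodable W] [Primcodable K1] [Primcodable K2]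
    [Primcodable K3] [Inhabited W] [Inhabited K1] [Inhabited K2] [Inhabited K3]
    (S : Set W) (Q : (((W × K1) × K2) × K3) → Bool) (hQ : Primrec Q)
    (h : ∀ w, w ∈ S ↔ ∃ k1, ∀ k2, ∃ k3, Q (((w, k1), k2), k3) = true) :
    NatSigma 3 (fun m => ∃ w : W, Encodable.encode w = m ∧ w ∈ S) := by
  obtain ⟨e, he, hee⟩ := exists_surj W
  obtain ⟨e1, he1, hee1⟩ := exists_surj K1
  obtain ⟨e2, he2, hee2⟩ := exists_surj K2
  obtain ⟨e3, he3, hee3⟩ := exists_surj K3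
  have s1 : Surjective e1 := fun a => ⟨_, hee1 a⟩
  have s2 : Surjective e2 := fun a => ⟨_, hee2 a⟩
  have s3 : Surjective e3 := fun a => ⟨_, hee3 a⟩
  have hu1 : Primrec (fun n : ℕ => n.unpair.1) := Primrec.fst.comp Primrec.unpair
  have hu2 : Primrec (fun n : ℕ => n.unpair.2) := Primrec.snd.comp Primrec.unpair
  have hm : Primrec (fun n : ℕ => n.unpair.1.unpair.1.unpair.1) := hu1.comp (hu1.comp hu1)
  let b : ℕ → Bool := fun n =>
    (decide (Encodable.encode (e n.unpair.1.unpair.1.unpair.1) = n.unpair.1.unpair.1.unpair.1)) &&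
    Q (((e n.unpair.1.unpair.1.unpair.1, e1 n.unpair.1.unpair.1.unpair.2),
      e2 n.unpair.1.unpair.2), e3 n.unpair.2)
  refine natSigma3 _ b ?_ ?_
  · refine Primrec.and.comp ?_ ?_
    · exact (Primrec.eq.comp (Primrec.encode.comp (he.comp hm)) hm).decide
    · refine hQ.comp (Primrec.pair (Primrec.pair (Primrec.pair (he.comp hm) ?_) ?_) (he3.comp hu2))
      · exact he1.comp (hu2.comp (hu1.comp hu1))
      · exact he2.comp (hu2.comp hu1)
  · intro m
    simp only [b, Nat.unpair_pair, Bool.and_eq_true, decide_eq_true_eq]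
    constructor
    · rintro ⟨w, rfl, hw⟩
      rw [h] at hw
      obtain ⟨k1, hk⟩ := hw
      refine ⟨Encodable.encode k1, fun k2 => ?_⟩
      obtain ⟨k3, hk3⟩ := hk (e2 k2)
      refine ⟨Encodable.encode k3, by rw [hee], ?_⟩
      rw [hee, hee1, hee3]; exact hk3
    · rintro ⟨k1, hk⟩
      refine ⟨e m, ?_, ?_⟩
      · obtain ⟨_, h1, _⟩ := hk 0
        exact h1
      · rw [h]
        refine ⟨e1 k1, fun k2 => ?_⟩
        obtain ⟨k3, _, h3⟩ := hk (Encodable.encode k2)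
        rw [hee2] at h3
        exact ⟨_, h3⟩

/-! topology -/

theorem key [TopologicalSpace A] [DiscreteTopology A] [Finite A]
    (f : (ℤ → A) → (ℤ → A)) (hf : Continuous f) (U : Set (ℤ → A)) (hU : IsClopen U) :
    (genLimitSet f ∩ U).Nonempty ↔
      ¬ Dense (⋃ T : ℕ, interior {x | ∀ t ≥ T, f^[t] x ∉ U}) := by
  have hcl : ∀ T : ℕ, IsClosed {x | ∀ t ≥ T, f^[t] x ∉ U} := by
    intro T
    simp only [Set.ofPred_forall]
    refine isClosed_iInter fun t => isClosed_iInter fun _ => ?_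
    exact (hU.isOpen.isClosed_compl).preimage (hf.iterate t)
  rw [← not_iff_not, not_not, Set.not_nonempty_iff_eq_empty]
  constructor
  · intro h
    have hfam : ∃ C, IsClosed C ∧ realm f C ∈ residual (ℤ → A) ∧ C ∩ U = ∅ := by
      have hc : IsCompact U := hU.isClosed.isCompact
      haveI : Nonempty {C | IsClosed C ∧ realm f C ∈ residual (ℤ → A)} :=
        ⟨⟨univ, isClosed_univ, mem_of_superset univ_mem fun x _ => subset_univ _⟩⟩
      obtain ⟨C, hC⟩ := hc.elim_directed_family_closed
        (fun C : {C | IsClosed C ∧ realm f C ∈ residual (ℤ → A)} => (C : Set (ℤ → A)))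
        (fun C => C.2.1) (by rw [← sInter_eq_iInter, inter_comm]; exact h)
        (fun C D => ⟨⟨C.1 ∩ D.1, C.2.1.inter D.2.1, mem_of_superset (inter_mem C.2.2 D.2.2)
          fun x hx => subset_inter hx.1 hx.2⟩, inter_subset_left, inter_subset_right⟩)
      exact ⟨C, C.2.1, C.2.2, by rw [inter_comm]; exact hC⟩
    obtain ⟨C, hC, hr, hCU⟩ := hfam
    obtain ⟨s, hs, hsG, hsd⟩ := mem_residual.1 hr
    refine hsG.dense_iUnion_interior_of_closed hsd hcl ?_
    intro x hx
    have hx' : omegaSet f x ⊆ C := hs hx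
    by_contra hcon
    simp only [mem_iUnion, Set.mem_ofPred_eq, not_exists, not_forall, not_not] at hcon
    have hfr : ∃ᶠ t in atTop, f^[t] x ∈ U := by
      rw [frequently_atTop]
      intro T
      obtain ⟨t, ht, h2⟩ := hcon T
      exact ⟨t, ht, h2⟩
    obtain ⟨y, hy, hyc⟩ := (hU.isClosed.isCompact).exists_mapClusterPt_of_frequently hfr
    have : y ∈ C ∩ U := ⟨hx' hyc, hy⟩
    rw [hCU] at this
    exact this
  · intro h
    have hres : realm f Uᶜ ∈ residual (ℤ → A) := by
      refine mem_of_superset (residual_of_dense_open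
        (isOpen_iUnion fun T => isOpen_interior) h) ?_
      intro x hx y hy hyU
      obtain ⟨T, hT⟩ := mem_iUnion.1 hx
      have hT := interior_subset hT
      have := (mapClusterPt_iff_frequently.1 hy) U (hU.isOpen.mem_nhds hyU)
      obtain ⟨t, ht, h2⟩ := frequently_atTop.1 this T
      exact hT t ht h2
    rw [eq_empty_iff_forall_notMem]
    rintro x ⟨hx, hxU⟩
    exact hx Uᶜ ⟨hU.isOpen.isClosed_compl, hres⟩ hxU

/-! cylinders -/

theorem word_eq (x : ℤ → A) (i : ℤ) (n : ℕ) :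
    word x i n = (List.range n).map fun k : ℕ => x (i + (k : ℤ)) := by
  show List.map _ (List.flatMap (fun a : ℕ => [(a : ℤ)]) (List.range n)) = _
  generalize List.range n = l
  induction l with
  | nil => rfl
  | cons a l ih => simp [ih]

theorem word_length (x : ℤ → A) (i n) : (word x i n).length = n := by simp [word_eq]

theorem word_add (x : ℤ → A) (i : ℤ) (m n : ℕ) :
    word x i (m + n) = word x i m ++ word x (i + m) n := by
  simp [word_eq, List.range_add, add_assoc]

theorem word_eq_iff (x y : ℤ → A) (i : ℤ) (n : ℕ) :
    word x i n = word y i n ↔ ∀ k : ℕ, k < n → x (i + k) = y (i + k) := by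
  simp [word_eq]

theorem cylinder_clopen [TopologicalSpace A] [DiscreteTopology A] (w : List A) (i : ℤ) :
    IsClopen (cylinder w i) := by
  have : cylinder w i = ⋂ k : Fin w.length, {x | x (i + (k : ℕ)) = w[k]} := by
    ext x
    simp only [cylinder, Set.mem_ofPred_eq, mem_iInter, word_eq]
    constructor
    · intro h k
      simp [← List.getElem_of_eq h (i := k) (by simp)]
    · intro h
      refine List.ext_getElem (by simp) fun n h1 h2 => ?_
      simpa using h ⟨n, h2⟩
  rw [this]
  refine isClopen_iInter_of_finite fun k => ?_
  exact (isClopen_discrete {w[k]}).preimage (continuous_apply (i + ((k : ℕ) : ℤ)))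

theorem cylinder_nonempty [Inhabited A] (w : List A) (i : ℤ) : (cylinder w i).Nonempty := by
  refine ⟨fun j => w.getD (j - i).toNat default, ?_⟩
  refine List.ext_getElem (by simp [word_eq]) fun n h1 h2 => ?_
  simp [word_eq, h2]

theorem nhd_agree [TopologicalSpace A] [DiscreteTopology A] (O : Set (ℤ → A)) (hO : IsOpen O)
    (x : ℤ → A) (hx : x ∈ O) :
    ∃ n : ℕ, ∀ y : ℤ → A, (∀ j : ℤ, -n ≤ j → j ≤ n → y j = x j) → y ∈ O := by
  rw [isOpen_pi_iff] at hO
  obtain ⟨I, u, hu, hI⟩ := hO x hx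
  refine ⟨I.sup Int.natAbs, fun y hy => hI ?_⟩
  intro j hj
  have h1 : j.natAbs ≤ I.sup Int.natAbs := Finset.le_sup (f := Int.natAbs) hj
  rw [hy j (by omega) (by omega)]
  exact (hu j hj).2

theorem agree_open [TopologicalSpace A] [DiscreteTopology A] (x : ℤ → A) (n : ℕ) :
    IsOpen {y : ℤ → A | ∀ j : ℤ, -n ≤ j → j ≤ n → y j = x j} := by
  have : {y : ℤ → A | ∀ j : ℤ, -n ≤ j → j ≤ n → y j = x j} =
      (Set.Icc (-n : ℤ) n).pi (fun j => {x j}) := by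
    ext y; simp [Set.mem_pi]
  rw [this]
  exact isOpen_set_pi (Set.finite_Icc _ _) (fun _ _ => isOpen_discrete _)

/-! local rule -/

theorem comm_shift (f : (ℤ → A) → (ℤ → A)) (h : f ∘ shift = shift ∘ f) (i : ℤ) :
    ∀ x : ℤ → A, f (fun k => x (k + i)) = fun k => f x (k + i) := by
  have h1 : ∀ x : ℤ → A, f (fun k => x (k + 1)) = fun k => f x (k + 1) := fun x => congrFun h x
  have h2 : ∀ x : ℤ → A, f (fun k => x (k + -1)) = fun k => f x (k + -1) := by
    intro x
    have := h1 (fun k => x (k + -1))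
    simp only [add_assoc] at this
    norm_num at this
    funext k
    rw [this]
    simp
  induction i using Int.induction_on with
  | zero => simp
  | succ n ih =>
    intro x
    have := h1 (fun k => x (k + n))
    rw [ih x] at this
    convert this using 2
    · funext k; congr 1; ring
    · congr 1; ring
  | pred n ih =>
    intro x
    have := h2 (fun k => x (k + -n))
    rw [ih x] at this
    convert this using 2
    · funext k; congr 1; ring
    · congr 1; ring

theorem local_rule [TopologicalSpace A] [DiscreteTopology A] [Finite A] [Inhabited A]
    (f : (ℤ → A) → (ℤ → A)) (hf : IsCA f) :
    ∃ r : ℕ, 1 ≤ r ∧ ∃ g : (Fin (2 * r + 1) → A) → A,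
      ∀ x i, f x i = g (fun k => x (i - r + (k : ℕ))) := by
  have hcont : Continuous (fun x => f x 0) := (continuous_apply 0).comp hf.1
  let O : ℕ → Set (ℤ → A) := fun n =>
    {x | ∀ y : ℤ → A, (∀ j : ℤ, -n ≤ j → j ≤ n → y j = x j) → f y 0 = f x 0}
  have hOo : ∀ n, IsOpen (O n) := by
    intro n
    rw [isOpen_iff_forall_mem_open]
    intro x hx
    refine ⟨_, ?_, agree_open x n, fun j _ _ => rfl⟩
    intro x' hx' y hy
    rw [hx x' hx', hx y fun j h1 h2 => by rw [hy j h1 h2, hx' j h1 h2]]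
  have hmono : Monotone O := by
    intro m n hmn x hx y hy
    exact hx y fun j h1 h2 => hy j (by omega) (by omega)
  have hcov : (univ : Set (ℤ → A)) ⊆ ⋃ n, O n := by
    intro x _
    obtain ⟨n, hn⟩ := nhd_agree ((fun x => f x 0) ⁻¹' {f x 0})
      ((isOpen_discrete _).preimage hcont) x rfl
    exact mem_iUnion.2 ⟨n, fun y hy => hn y hy⟩
  obtain ⟨n, hn⟩ := isCompact_univ.elim_directed_cover O hOo hcov (directed_of_isDirected_le hmono)
  refine ⟨n + 1, by omega, fun v => f (fun j => if h : (j + (n + 1)).toNat < 2 * (n + 1) + 1 then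
    v ⟨(j + (n + 1)).toNat, h⟩ else default) 0, fun x i => ?_⟩
  have h1 := congrFun (comm_shift f hf.2 i x) 0
  simp only [zero_add] at h1
  rw [← h1]
  symm
  apply hn (mem_univ (fun k => x (k + i)))
  intro j h1 h2
  rw [dif_pos (by omega)]
  congr 1
  push_cast
  rw [Int.toNat_of_nonneg (by omega)]
  ring

/-! block map -/

/-- The block map of a local rule. -/
def stepL [Inhabited A] (r : ℕ) (g : (Fin (2 * r + 1) → A) → A) (l : List A) : List A :=
  (List.range (l.length - 2 * r)).map fun i => g (fun k => l.getD (i + (k : ℕ)) default)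

theorem stepL_primrec [Inhabited A] [Primcodable A] [Finite A] (r : ℕ)
    (g : (Fin (2 * r + 1) → A) → A) : Primrec (stepL r g) := by
  refine Primrec.list_map (Primrec.list_range.comp
    (Primrec.nat_sub.comp Primrec.list_length (Primrec.const _))) ?_
  refine (Primrec.dom_finite g).comp ?_
  rw [Primrec.fin_curry]
  refine (Primrec.list_getD default).comp (Primrec.fst.comp Primrec.fst) ?_
  exact Primrec.nat_add.comp (Primrec.snd.comp Primrec.fst) (Primrec.fin_val.comp Primrec.snd)

theorem stepL_word [Inhabited A] (r : ℕ) (g : (Fin (2 * r + 1) → A) → A)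
    (f : (ℤ → A) → (ℤ → A)) (hg : ∀ x i, f x i = g (fun k => x (i - r + (k : ℕ))))
    (x : ℤ → A) (z : ℤ) (n : ℕ) :
    stepL r g (word x z n) = word (f x) (z + r) (n - 2 * r) := by
  unfold stepL
  rw [word_length]
  rw [word_eq, word_eq]
  refine List.map_congr_left fun i hi => ?_
  rw [List.mem_range] at hi
  rw [hg]
  congr 1
  funext k
  have hk := k.2
  rw [List.getD_eq_getElem _ _ (by simp; omega)]
  simp only [List.getElem_map, List.getElem_range]
  congr 1
  push_cast
  ring

theorem stepL_iter [Inhabited A] (r : ℕ) (g : (Fin (2 * r + 1) → A) → A)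
    (f : (ℤ → A) → (ℤ → A)) (hg : ∀ x i, f x i = g (fun k => x (i - r + (k : ℕ))))
    (t : ℕ) : ∀ (x : ℤ → A) (z : ℤ) (n : ℕ),
    (stepL r g)^[t] (word x z n) = word (f^[t] x) (z + r * t) (n - 2 * r * t) := by
  induction t with
  | zero => intro x z n; simp
  | succ t ih =>
    intro x z n
    rw [iterate_succ_apply, iterate_succ_apply, stepL_word r g f hg, ih]
    congr 1
    · push_cast; ring
    · rw [Nat.sub_sub]; congr 1; ring

theorem main_iff [TopologicalSpace A] [DiscreteTopology A] [Finite A] [Inhabited A]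
    (r : ℕ) (hr : 1 ≤ r) (g : (Fin (2 * r + 1) → A) → A)
    (f : (ℤ → A) → (ℤ → A)) (hf : Continuous f)
    (hg : ∀ x i, f x i = g (fun k => x (i - r + (k : ℕ)))) (w : List A) :
    w ∈ lang (genLimitSet f) ↔
      ∃ k1 : List A × ℕ × ℕ, ∀ k2 : List A × List A × ℕ, ∃ k3 : ℕ × List A × List A,
        k2.2.2 ≤ k3.1 ∧ r * k3.1 + k1.2.1 = k1.2.2 + k2.1.length + k3.2.1.length ∧
        (stepL r g)^[k3.1] (k3.2.1 ++ ((k2.1 ++ (k1.1 ++ k2.2.1)) ++ k3.2.2)) = w := by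
  have hl : w ∈ lang (genLimitSet f) ↔ ∃ i : ℤ, (genLimitSet f ∩ cylinder w i).Nonempty :=
    ⟨fun ⟨x, hx, i, h⟩ => ⟨i, x, hx, h⟩, fun ⟨i, x, hx, h⟩ => ⟨x, hx, i, h⟩⟩
  rw [hl]
  constructor
  · rintro ⟨i, hi⟩
    rw [key f hf _ (cylinder_clopen w i)] at hi
    simp only [Dense, not_forall, mem_closure_iff, exists_prop] at hi
    obtain ⟨x, O, hO, hxO, hdis⟩ := hi
    obtain ⟨n, hn⟩ := nhd_agree O hO x hxO
    refine ⟨(word x (-n) (2 * n + 1), (-n - i).toNat, (i + n).toNat), ?_⟩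
    rintro ⟨a, b, T⟩
    simp only
    set u := word x (-n) (2 * n + 1) with hu
    have hul : u.length = 2 * n + 1 := word_length _ _ _
    set T' := T + i.natAbs + n + a.length + b.length + u.length with hT'
    have hex : ∃ y ∈ cylinder (a ++ (u ++ b)) (-n - a.length),
        ∃ t ≥ T', f^[t] y ∈ cylinder w i := by
      by_contra hcon
      push Not at hcon
      obtain ⟨y, hy⟩ := cylinder_nonempty (a ++ (u ++ b)) (-n - a.length)
      refine hdis ⟨y, hn y ?_, ?_⟩
      · intro j hj1 hj2
        have h4 : word y (-n - a.length) (a ++ (u ++ b)).length = a ++ (u ++ b) := hy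
        rw [List.length_append, List.length_append, word_add, word_add, sub_add_cancel] at h4
        have h5 := (List.append_inj h4 (word_length _ _ _)).2
        have h6 := (List.append_inj h5 (word_length _ _ _)).1
        rw [hul, hu, word_eq_iff] at h6
        have := h6 (j + n).toNat (by omega)
        rwa [show -(n : ℤ) + ((j + n).toNat : ℤ) = j by omega] at this
      · refine mem_iUnion.2 ⟨T', ?_⟩
        exact interior_maximal (fun y hy t ht => hcon y hy t ht)
          (cylinder_clopen _ _).isOpen hy
    obtain ⟨y, hy, t, ht, hyt⟩ := hex
    have hrt : t ≤ r * t := Nat.le_mul_of_pos_left t hr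
    have hyt' : word (f^[t] y) i w.length = w := hyt
    have hy' : word y (-n - a.length) (a ++ (u ++ b)).length = a ++ (u ++ b) := hy
    obtain ⟨C, hC⟩ : ∃ C : ℕ, (C : ℤ) = -n - a.length - i + ((r * t : ℕ) : ℤ) :=
      ⟨(-n - a.length - i + ((r * t : ℕ) : ℤ)).toNat, by omega⟩
    obtain ⟨D, hD⟩ : ∃ D : ℕ, (D : ℤ) = i + w.length + ((r * t : ℕ) : ℤ) -
        (-n - a.length + (a ++ (u ++ b)).length) :=
      ⟨(i + w.length + ((r * t : ℕ) : ℤ) - (-n - a.length + (a ++ (u ++ b)).length)).toNat, by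
        simp only [List.length_append]; omega⟩
    refine ⟨(t, word y (i - ((r * t : ℕ) : ℤ)) C,
      word y (-n - a.length + (a ++ (u ++ b)).length) D), by simp only; omega, ?_, ?_⟩
    · simp only [word_length]
      omega
    · simp only
      have e : word y (i - ((r * t : ℕ) : ℤ)) (C + ((a ++ (u ++ b)).length + D)) =
          word y (i - ((r * t : ℕ) : ℤ)) C ++ ((a ++ (u ++ b)) ++
          word y (-n - a.length + (a ++ (u ++ b)).length) D) := by
        rw [word_add, word_add, hC]
        have : i - ((r * t : ℕ) : ℤ) + (-n - a.length - i + ((r * t : ℕ) : ℤ)) = -n - a.length := by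
          ring
        rw [this, hy']
      rw [← e, stepL_iter r g f hg]
      have e1 : i - ((r * t : ℕ) : ℤ) + r * t = i := by push_cast; ring
      have e2 : C + ((a ++ (u ++ b)).length + D) - 2 * r * t = w.length := by
        rw [mul_assoc]
        omega
      rw [e1, e2, hyt']
  · rintro ⟨⟨u, p, q⟩, h⟩
    refine ⟨0, ?_⟩
    rw [key f hf _ (cylinder_clopen w 0)]
    intro hd
    set z : ℤ := p - q with hz
    obtain ⟨x, hxu, hxG⟩ := hd.inter_open_nonempty _ (cylinder_clopen u z).isOpen
      (cylinder_nonempty u z)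
    obtain ⟨T, hT⟩ := mem_iUnion.1 hxG
    obtain ⟨n, hn⟩ := nhd_agree _ isOpen_interior x hT
    obtain ⟨N, hN⟩ : ∃ N : ℕ, N = n + p + q + 1 := ⟨_, rfl⟩
    obtain ⟨⟨t, c, d⟩, h1, h2, h3⟩ := h (word x (z - N) N, word x (z + u.length) N, T)
    simp only [word_length] at h1 h2 h3
    have hx' : word x z u.length = u := hxu
    have e : word x (z - N) N ++ (u ++ word x (z + u.length) N) =
        word x (z - N) (N + (u.length + N)) := by
      rw [word_add, word_add, sub_add_cancel, hx']
    rw [e] at h3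
    set v := word x (z - N) (N + (u.length + N)) with hv
    have hvl : v.length = N + (u.length + N) := word_length _ _ _
    obtain ⟨y, hy⟩ := cylinder_nonempty (c ++ (v ++ d)) (z - N - c.length)
    have hy1 : word y (z - N - c.length) (c ++ (v ++ d)).length = c ++ (v ++ d) := hy
    have hy2 : word y (z - N) v.length = v := by
      have h4 := hy1
      rw [List.length_append, List.length_append, word_add, word_add, sub_add_cancel] at h4
      have h5 := (List.append_inj h4 (word_length _ _ _)).2
      exact (List.append_inj h5 (word_length _ _ _)).1
    rw [hvl, hv, word_eq_iff] at hy2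
    have hyG := interior_subset (hn y fun j hj1 hj2 => by
      have := hy2 (j - (z - N)).toNat (by omega)
      rwa [show z - N + ((j - (z - N)).toNat : ℤ) = j by omega] at this)
    refine hyG t h1 ?_
    have h6 := stepL_iter r g f hg t y (z - N - c.length) (c ++ (v ++ d)).length
    rw [hy1, h3] at h6
    have h7 : z - N - c.length + r * t = 0 := by
      have : (r : ℤ) * t = ((r * t : ℕ) : ℤ) := by push_cast; ring
      rw [this]; omega
    rw [h7] at h6
    have h8 := congrArg List.length h6
    rw [word_length] at h8
    show word _ 0 w.length = w
    rw [h8, ← h6]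

/-- the language of the generic limit set of any CA is `Σ⁰₃`. -/
theorem stmt4 [Fintype A] [Primcodable A] [TopologicalSpace A] [DiscreteTopology A]
    (f : (ℤ → A) → (ℤ → A)) (hf : IsCA f) :
    SigmaLang 3 (lang (genLimitSet f)) := by
  rcases isEmpty_or_nonempty A with hA | ⟨⟨a0⟩⟩
  · refine natSigma3 _ (fun _ => false) (Primrec.const _) fun m => ?_
    constructor
    · rintro ⟨w, _, x, _⟩
      exact (hA.false (x 0)).elim
    · rintro ⟨k, h⟩
      obtain ⟨_, h⟩ := h 0
      simp at h
  · haveI : Inhabited A := ⟨a0⟩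
    obtain ⟨r, hr, g, hg⟩ := local_rule f hf
    let Q : (((List A × (List A × ℕ × ℕ)) × (List A × List A × ℕ)) × (ℕ × List A × List A)) → Prop :=
      fun ⟨⟨⟨w, k1⟩, k2⟩, k3⟩ => k2.2.2 ≤ k3.1 ∧
        r * k3.1 + k1.2.1 = k1.2.2 + k2.1.length + k3.2.1.length ∧
        (stepL r g)^[k3.1] (k3.2.1 ++ ((k2.1 ++ (k1.1 ++ k2.2.1)) ++ k3.2.2)) = w
    have hQ : PrimrecPred Q := by
      have p1 : Primrec (fun x : (((List A × (List A × ℕ × ℕ)) × (List A × List A × ℕ)) ×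
          (ℕ × List A × List A)) => x.1.1.2) := Primrec.snd.comp (Primrec.fst.comp Primrec.fst)
      have p2 : Primrec (fun x : (((List A × (List A × ℕ × ℕ)) × (List A × List A × ℕ)) ×
          (ℕ × List A × List A)) => x.1.2) := Primrec.snd.comp Primrec.fst
      have p3 : Primrec (fun x : (((List A × (List A × ℕ × ℕ)) × (List A × List A × ℕ)) ×
          (ℕ × List A × List A)) => x.2) := Primrec.snd
      have pt := Primrec.fst.comp p3
      have pc := Primrec.fst.comp (Primrec.snd.comp p3)
      have pd := Primrec.snd.comp (Primrec.snd.comp p3)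
      have pa := Primrec.fst.comp p2
      have pb := Primrec.fst.comp (Primrec.snd.comp p2)
      refine PrimrecPred.and ?_ (PrimrecPred.and ?_ ?_)
      · exact Primrec.nat_le.comp (Primrec.snd.comp (Primrec.snd.comp p2)) pt
      · refine Primrec.eq.comp ?_ ?_
        · exact Primrec.nat_add.comp (Primrec.nat_mul.comp (Primrec.const r) pt)
            (Primrec.fst.comp (Primrec.snd.comp p1))
        · exact Primrec.nat_add.comp (Primrec.nat_add.comp
            (Primrec.snd.comp (Primrec.snd.comp p1)) (Primrec.list_length.comp pa))
            (Primrec.list_length.comp pc)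
      · refine Primrec.eq.comp ?_ (Primrec.fst.comp (Primrec.fst.comp Primrec.fst))
        refine Primrec.nat_iterate (h := fun _ => stepL r g) pt ?_
          ((stepL_primrec r g).comp Primrec.snd)
        exact Primrec.list_append.comp pc (Primrec.list_append.comp (Primrec.list_append.comp pa
          (Primrec.list_append.comp (Primrec.fst.comp p1) pb)) pd)
    obtain ⟨hdec, hQ⟩ := hQ
    refine sigma3_of _ _ hQ fun w => ?_
    rw [main_iff r hr g f hf.1 hg]
    simp only [decide_eq_true_eq, Q]

end Gls
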